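/- Let ℋ be an algebra with finite-order automorphism ι and let Σ̃ be an irreducible finite-dimensional representation of the crossed product ℋ ⋊ ⟨ι⟩. Then the restriction of Σ̃ to ℋ is irreducible if and only if the trace tr(Σ̃(ι × f)) is not identically zero as f ranges over ℋ. -/

import Mathlib

theorem aux_burnside {k : Type*} [Field k] [IsAlgClosed k]
    {H : Type*} [Ring H] [Algebra k H]
    {V : Type*} [AddCommGroup V] [Module k V] [FiniteDimensional k V]
    [Module H V] [IsScalarTower k H V] [IsSimpleModule H V]
    (g : Module.End k V) : ∃ f : H, ∀ v : V, f • v = g v := by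
  classical
  let g' : Module.End (Module.End H V) V :=
    { toFun := g
      map_add' := g.map_add
      map_smul' := by
        intro c x
        obtain ⟨t, rfl⟩ := (IsSimpleModule.algebraMap_end_bijective_of_isAlgClosed
          (A := H) (V := V) k).2 c
        simp [Module.algebraMap_end_apply] }
  obtain ⟨s, hs⟩ := Module.Finite.fg_top (R := k) (M := V)
  obtain ⟨r, hr⟩ := jacobson_density (R := H) g' s
  have hcomm : ∀ (a : k) (v : V), r • a • v = a • r • v := by
    intro a v
    rw [← algebraMap_smul H a v, ← algebraMap_smul H a (r • v), smul_smul, smul_smul,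
      Algebra.commutes]
  refine ⟨r, fun m => ?_⟩
  have hm : m ∈ Submodule.span k (s : Set V) := hs.ge trivial
  induction hm using Submodule.span_induction with
  | mem m hm => exact (hr m hm).symm
  | zero => simp
  | add _ _ _ _ h₁ h₂ => simp [h₁, h₂]
  | smul a x _ h => rw [hcomm, h, map_smul]

theorem aux_complemented {k : Type*} [Field k]
    {H : Type*} [Ring H] [Algebra k H]
    {V : Type*} [AddCommGroup V] [Module k V] [FiniteDimensional k V] [Nontrivial V]
    [Module H V] [IsScalarTower k H V] (ι : H ≃ₐ[k] H) (A : V ≃ₗ[k] V)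
    (hconj : ∀ (f : H) (x : V), A (f • x) = ι f • A x)
    (hirr : ∀ W : Submodule H V, (∀ x ∈ W, A x ∈ W) → W = ⊥ ∨ W = ⊤) :
    ComplementedLattice (Submodule H V) := by
  have hart : IsArtinian H V := isArtinian_of_tower k inferInstance
  let σ : H →+* H := (ι.toRingEquiv : H →+* H)
  let σ' : H →+* H := (ι.symm.toRingEquiv : H →+* H)
  haveI : RingHomInvPair σ σ' := ⟨by ext x; simp [σ, σ'], by ext x; simp [σ, σ']⟩
  haveI : RingHomInvPair σ' σ := ⟨by ext x; simp [σ, σ'], by ext x; simp [σ, σ']⟩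
  let A' : V ≃ₛₗ[σ] V :=
    { A.toAddEquiv with
      map_smul' := fun f x => hconj f x }
  let e : Submodule H V ≃o Submodule H V := Submodule.orderIsoMapComap A'
  have he : e (sSup {a | IsAtom a}) ≤ sSup {a | IsAtom a} := by
    rw [OrderIso.map_sSup]
    refine iSup₂_le fun a ha => le_sSup ?_
    exact (e.isAtom_iff a).2 ha
  apply complementedLattice_of_sSup_atoms_eq_top
  refine (hirr _ ?_).resolve_left ?_
  · intro x hx
    exact he (Submodule.mem_map_of_mem (f := (A' : V →ₛₗ[σ] V)) hx)
  · intro h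
    obtain ⟨a, ha, -⟩ := (eq_bot_or_exists_atom_le (⊤ : Submodule H V)).resolve_left top_ne_bot
    exact ha.1 (le_bot_iff.1 (h ▸ le_sSup ha))

theorem aux_twist {k : Type*} [Field k] [CharZero k] [IsAlgClosed k]
    {H : Type*} [Ring H] [Algebra k H]
    {V : Type*} [AddCommGroup V] [Module k V] [FiniteDimensional k V]
    (l : ℕ) (hl : 0 < l) (ι : H ≃ₐ[k] H)
    (ρ : H →ₐ[k] Module.End k V) (A : V ≃ₗ[k] V) (hA : A ^ l = 1)
    (hconj : ∀ f x, A (ρ f x) = ρ (ι f) (A x))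
    (hirr : ∀ W : Submodule k V,
      (∀ f, ∀ x ∈ W, ρ f x ∈ W) → (∀ x ∈ W, A x ∈ W) → W = ⊥ ∨ W = ⊤)
    (f : H) (hf : LinearMap.trace k V (A.toLinearMap ∘ₗ ρ f) ≠ 0)
    (c : Module.End k V) (hc : ∀ g x, c (ρ g x) = ρ g (c x)) (x : V) : A (c x) = c (A x) := by
  -- eigenvectors of conjugation have eigenvalue one
  have key : ∀ (d : Module.End k V) (μ : k), d ≠ 0 → (∀ g x, d (ρ g x) = ρ g (d x)) →
      (∀ x, A (d x) = μ • d (A x)) → μ = 1 := by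
    intro d μ hd hdc hdA
    have hker : LinearMap.ker d = ⊥ := by
      refine (hirr (LinearMap.ker d) ?_ ?_).resolve_right ?_
      · intro g x hx
        simp only [LinearMap.mem_ker] at hx ⊢
        rw [hdc, hx, map_zero]
      · intro x hx
        simp only [LinearMap.mem_ker] at hx ⊢
        have h := hdA x
        rw [hx, map_zero] at h
        rcases smul_eq_zero.1 h.symm with h0 | h0
        · exfalso
          apply hd
          ext y
          have := hdA y
          rw [h0, zero_smul] at this
          simpa using this
        · exact h0
      · intro h
        exact hd (LinearMap.ker_eq_top.1 h)
    let e : V ≃ₗ[k] V := LinearEquiv.ofInjectiveEndo d (LinearMap.ker_eq_bot.1 hker)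
    have he : ∀ x, e x = d x := fun x => by simp [e]
    set M : Module.End k V := A.toLinearMap ∘ₗ ρ f with hM
    have hMd : e.conj (μ • M) = M := by
      ext y
      obtain ⟨z, rfl⟩ := e.surjective y
      rw [LinearEquiv.conj_apply_apply, e.symm_apply_apply, he, he]
      simp only [hM, LinearMap.smul_apply, LinearMap.comp_apply, LinearEquiv.coe_coe, map_smul]
      rw [← hdc, hdA]
    have ht := LinearMap.trace_conj' (μ • M) e
    rw [hMd, map_smul, smul_eq_mul] at ht
    exact (mul_right_cancel₀ hf (by rw [one_mul]; exact ht)).symm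
  let T : Module.End k (Module.End k V) := A.conj.toLinearMap
  have hT : ∀ (d : Module.End k V) y, T d (A y) = A (d y) := by
    intro d y
    simp [T, LinearEquiv.conj_apply_apply]
  let C : Submodule k (Module.End k V) :=
    { carrier := {d | ∀ g x, d (ρ g x) = ρ g (d x)}
      add_mem' := by intro a b ha hb g x; simp [ha g x, hb g x]
      zero_mem' := by intro g x; simp
      smul_mem' := by intro a b hb g x; simp [hb g x] }
  have hTC : ∀ d ∈ C, T d ∈ C := by
    intro d hd g x
    obtain ⟨g, rfl⟩ := ι.surjective g
    obtain ⟨x, rfl⟩ := A.surjective x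
    rw [← hconj, hT, hT, hd g x, hconj]
  let D : Submodule k (Module.End k V) := C.map (T - 1)
  have hDC : ∀ d ∈ D, d ∈ C := by
    rintro _ ⟨e, he, rfl⟩
    exact C.sub_mem (hTC e he) he
  have hTD : ∀ d ∈ D, T d ∈ D := by
    rintro _ ⟨e, he, rfl⟩
    exact ⟨T e, hTC e he, by simp⟩
  have hDbot : D = ⊥ := by
    by_contra hne
    haveI : Nontrivial D := Submodule.nontrivial_iff_ne_bot.2 hne
    obtain ⟨μ, hμ⟩ := Module.End.exists_eigenvalue (T.restrict hTD)
    obtain ⟨⟨d, hd⟩, hdv⟩ := hμ.exists_hasEigenvector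
    have hd0 : d ≠ 0 := fun h => hdv.2 (by ext1; exact h)
    have hTd : T d = μ • d := congrArg Subtype.val hdv.apply_eq_smul
    have hμ1 : μ = 1 := key d μ hd0 (hDC d hd) (fun x => by
      rw [← hT, hTd, LinearMap.smul_apply])
    rw [hμ1, one_smul] at hTd
    obtain ⟨e, he, hed⟩ := hd
    have hTe : T e = e + d := by rw [← hed]; simp
    have hpow : ∀ n : ℕ, (T ^ n) e = e + (n : k) • d := by
      intro n
      induction n with
      | zero => simp
      | succ n ih =>
        rw [pow_succ', Module.End.mul_apply, ih, map_add, map_smul, hTd, hTe]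
        push_cast
        module
    have hpowA : ∀ (n : ℕ) y, (T ^ n) e ((A ^ n) y) = (A ^ n) (e y) := by
      intro n
      induction n with
      | zero => simp
      | succ n ih =>
        intro y
        rw [pow_succ', pow_succ', Module.End.mul_apply, LinearEquiv.mul_apply, hT, ih,
          LinearEquiv.mul_apply]
    have hTl : (T ^ l) e = e := by
      ext y
      have := hpowA l y
      rw [hA] at this
      simpa using this
    rw [hpow, add_eq_left] at hTl
    rcases smul_eq_zero.1 hTl with h | h
    · exact hl.ne' (by exact_mod_cast h)
    · exact hd0 h
  have hmem : (T - 1) c ∈ D := ⟨c, hc, rfl⟩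
  rw [hDbot, Submodule.mem_bot] at hmem
  have hTc : T c = c := by simpa [sub_eq_zero] using hmem
  rw [← hT, hTc]


/-- Let `ℋ` be an algebra with a finite-order automorphism `ι`, and let
`Σ̃` be an irreducible finite-dimensional representation of the crossed product
`ℋ ⋊ ⟨ι⟩`, given by the pair `(ρ, A)` where `ρ` is the restriction of `Σ̃` to `ℋ`
and `A = Σ̃(ι)` satisfies `A^l = 1` and `A ρ(f) A⁻¹ = ρ(f^ι)`.  Then the restriction
`ρ` of `Σ̃` to `ℋ` is irreducible if and only if the twisted trace
`f ↦ tr(Σ̃(ι × f)) = tr(A ∘ ρ(f))` is not identically zero on `ℋ`.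
(Representations over an algebraically closed field of characteristic 0.) -/
theorem crossed_restriction_irreducible_iff_twisted_trace_nonzero
    {k : Type*} [Field k] [IsAlgClosed k] [CharZero k]
    {H : Type*} [Ring H] [Algebra k H]
    {V : Type*} [AddCommGroup V] [Module k V] [FiniteDimensional k V] [Nontrivial V]
    (ι : H ≃ₐ[k] H) (l : ℕ) (hl : 0 < l) (hord : ι ^ l = 1)
    (ρ : H →ₐ[k] Module.End k V) (A : V ≃ₗ[k] V)
    (hA : A ^ l = 1)
    (hconj : ∀ f x, A (ρ f x) = ρ (ι f) (A x))
    (hirr : ∀ W : Submodule k V,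
      (∀ f, ∀ x ∈ W, ρ f x ∈ W) → (∀ x ∈ W, A x ∈ W) → W = ⊥ ∨ W = ⊤) :
    (∀ W : Submodule k V, (∀ f, ∀ x ∈ W, ρ f x ∈ W) → W = ⊥ ∨ W = ⊤) ↔
      ∃ f : H, LinearMap.trace k V (A.toLinearMap ∘ₗ ρ f) ≠ 0 := by

  letI : Module H V := Module.compHom V ρ.toRingHom
  have hsm : ∀ (f : H) (x : V), f • x = ρ f x := fun _ _ => rfl
  haveI : IsScalarTower k H V := ⟨fun a f x => by simp [hsm]⟩
  have hk : ∀ (W : Submodule H V), W.restrictScalars k = ⊥ → W = ⊥ := fun W h => by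
    simpa using h
  have hk' : ∀ (W : Submodule H V), W.restrictScalars k = ⊤ → W = ⊤ := fun W h => by
    simpa using h
  constructor
  · intro h
    haveI : IsSimpleModule H V :=
      { eq_bot_or_eq_top := fun W => (h (W.restrictScalars k)
          (fun f x hx => W.smul_mem f hx)).imp (hk W) (hk' W) }
    obtain ⟨f, hf⟩ := aux_burnside (k := k) (H := H) (V := V) A.symm.toLinearMap
    refine ⟨f, ?_⟩
    have : A.toLinearMap ∘ₗ ρ f = LinearMap.id := by
      ext x
      have := hf x
      rw [hsm] at this
      simp [this]
    rw [this, LinearMap.trace_id]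
    exact_mod_cast Module.finrank_pos.ne'
  · rintro ⟨f, hf⟩ W hW
    haveI := aux_complemented (k := k) (H := H) (V := V) ι A hconj (fun W hWA =>
      (hirr (W.restrictScalars k) (fun f x hx => W.smul_mem f hx) hWA).imp (hk W) (hk' W))
    let W' : Submodule H V := { W with smul_mem' := fun f x hx => hW f x hx }
    obtain ⟨U, hU⟩ := exists_isCompl W'
    let p : V →ₗ[H] V := W'.projection U hU
    refine hirr W hW fun x hx => ?_
    have hp := aux_twist l hl ι ρ A hA hconj hirr f hf (p.restrictScalars k)
      (fun g x => p.map_smul g x) x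
    have hpx : p x = x := Submodule.projection_apply_of_mem_left hU hx
    have hmem : p (A x) ∈ W' := Submodule.projection_apply_mem hU (A x)
    rw [LinearMap.restrictScalars_apply, LinearMap.restrictScalars_apply, hpx] at hp
    rw [hp]
    exact hmem
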